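/- Let n ≥ 1 be an integer and let (p,q,r) ∈ ℤ³ with r ≠ 0. Then there exists a smooth curve γ = (x,y,z) : ℝ → ℝ³ such that: (i) γ(t+1) = γ(t) + (p,q,r) for all t ∈ ℝ; (ii) γ is ξ_n-Legendrian, i.e. cos(2πn z(t))·x'(t) + sin(2πn z(t))·y'(t) = 0 for all t; (iii) r·z'(t) > 0 for all t (in particular γ'(t) ≠ 0, so γ is an immersion); and (iv) γ descends to an embedded knot in the 3-torus: for all s,t ∈ ℝ, if γ(s) − γ(t) ∈ ℤ³ then s − t ∈ ℤ. -/

import Mathlib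

open Real

noncomputable section

lemma int_abs_half_zero (m : ℤ) (e : ℝ) (h : (m : ℝ) = e) (he : |e| ≤ 1 / 2) : e = 0 := by
  have h1 : |(m : ℝ)| < 1 := by rw [h]; linarith
  have h2 : |m| < 1 := by exact_mod_cast h1
  have h3 : m = 0 := Int.abs_lt_one_iff.mp h2
  rw [← h, h3]; simp

lemma cos_shift (a b : ℝ) (k : ℤ) (h : a = b + 2 * π * k) : Real.cos a = Real.cos b := by
  rw [h, show b + 2 * π * k = b + k * (2 * π) by ring, Real.cos_add_int_mul_two_pi]

lemma sin_shift (a b : ℝ) (k : ℤ) (h : a = b + 2 * π * k) : Real.sin a = Real.sin b := by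
  rw [h, show b + 2 * π * k = b + k * (2 * π) by ring, Real.sin_add_int_mul_two_pi]

/-- The perturbation, first coordinate. -/
def pX (K L : ℝ) (t : ℝ) : ℝ := L * Real.cos (2 * π * K * t) - K * Real.cos (2 * π * L * t)
/-- The perturbation, second coordinate. -/
def pY (K L : ℝ) (t : ℝ) : ℝ := L * Real.sin (2 * π * K * t) + K * Real.sin (2 * π * L * t)

lemma lin_bound (K L a b c d : ℝ) (ha : |a| ≤ 1) (hb : |b| ≤ 1) (hc : |c| ≤ 1) (hd : |d| ≤ 1) :
    |(L * a + K * b) - (L * c + K * d)| ≤ 2 * (|K| + |L|) := by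
  have h (u v : ℝ) (hv : |v| ≤ 1) : |u * v| ≤ |u| := by
    rw [abs_mul]; nlinarith [abs_nonneg u]
  have h1 := abs_sub (L * a + K * b) (L * c + K * d)
  have h2 := abs_add_le (L * a) (K * b)
  have h3 := abs_add_le (L * c) (K * d)
  linarith [h L a ha, h K b hb, h L c hc, h K d hd]

lemma pX_bound (K L s t : ℝ) : |pX K L s - pX K L t| ≤ 2 * (|K| + |L|) := by
  have := lin_bound (-K) L _ _ _ _ (abs_cos_le_one (2 * π * K * s)) (abs_cos_le_one (2 * π * L * s))
    (abs_cos_le_one (2 * π * K * t)) (abs_cos_le_one (2 * π * L * t))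
  rw [abs_neg] at this
  convert this using 2
  unfold pX; ring

lemma pY_bound (K L s t : ℝ) : |pY K L s - pY K L t| ≤ 2 * (|K| + |L|) :=
  lin_bound K L _ _ _ _ (abs_sin_le_one (2 * π * K * s)) (abs_sin_le_one (2 * π * L * s))
    (abs_sin_le_one (2 * π * K * t)) (abs_sin_le_one (2 * π * L * t))

lemma chord (a d : ℝ) : (cos (a + d) - cos a) ^ 2 + (sin (a + d) - sin a) ^ 2
    = 2 - 2 * cos d := by
  have h1 := sin_sq_add_cos_sq a
  have h2 := sin_sq_add_cos_sq d
  rw [cos_add, sin_add]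
  linear_combination (cos d ^ 2 + sin d ^ 2 + 1 - 2 * cos d) * h1 + h2

lemma p_inj (K L s t : ℝ) (k l : ℤ) (hk : K * (s - t) = k + (s - t)) (hl : L * (s - t) = l + (s - t))
    (hKL : K ^ 2 ≠ L ^ 2) (hX : pX K L s = pX K L t) (hY : pY K L s = pY K L t) :
    ∃ m : ℤ, s - t = m := by
  unfold pX at hX
  unfold pY at hY
  have eK : 2 * π * K * s = (2 * π * K * t + 2 * π * (s - t)) + 2 * π * k := by
    linear_combination (2 * π) * hk
  have eL : 2 * π * L * s = (2 * π * L * t + 2 * π * (s - t)) + 2 * π * l := by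
    linear_combination (2 * π) * hl
  rw [cos_shift _ _ _ eK, cos_shift _ _ _ eL] at hX
  rw [sin_shift _ _ _ eK, sin_shift _ _ _ eL] at hY
  have c1 := chord (2 * π * K * t) (2 * π * (s - t))
  have c2 := chord (2 * π * L * t) (2 * π * (s - t))
  generalize cos (2 * π * K * t + 2 * π * (s - t)) = A at *
  generalize cos (2 * π * L * t + 2 * π * (s - t)) = B at *
  generalize sin (2 * π * K * t + 2 * π * (s - t)) = C at *
  generalize sin (2 * π * L * t + 2 * π * (s - t)) = D at *
  generalize cos (2 * π * K * t) = A' at *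
  generalize cos (2 * π * L * t) = B' at *
  generalize sin (2 * π * K * t) = C' at *
  generalize sin (2 * π * L * t) = D' at *
  have e1 : L * (A - A') = K * (B - B') := by linarith
  have e2 : L * (C - C') = -(K * (D - D')) := by linarith
  have e : (K ^ 2 - L ^ 2) * (2 - 2 * cos (2 * π * (s - t))) = 0 := by
    have f1 : (L * (A - A')) ^ 2 = (K * (B - B')) ^ 2 := by rw [e1]
    have f2 : (L * (C - C')) ^ 2 = (K * (D - D')) ^ 2 := by rw [e2]; ring
    linear_combination L ^ 2 * c1 - K ^ 2 * c2 - f1 - f2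
  rcases mul_eq_zero.mp e with h | h
  · exact absurd (sub_eq_zero.mp h) hKL
  · obtain ⟨m, hm⟩ := (Real.cos_eq_one_iff _).mp (by linarith : cos (2 * π * (s - t)) = 1)
    refine ⟨m, ?_⟩
    have : (2 * π) * (s - t - m) = 0 := by linear_combination -hm
    rcases mul_eq_zero.mp this with h | h
    · exact absurd h (by positivity)
    · linarith

lemma hd_lin (c t : ℝ) : HasDerivAt (fun t : ℝ => c * t) c t := by
  simpa using (hasDerivAt_id t).const_mul c

/-- For every `n ≥ 1` and `(p,q,r) ∈ ℤ³` with `r ≠ 0`, there is a smooth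
`(p,q,r)`-periodic `ξ_n`-Legendrian curve `γ = (x,y,z) : ℝ → ℝ³` with `r·z'(t) > 0`
everywhere, descending to an embedded knot in the 3-torus. -/
theorem exists_periodic_legendrian_knot (n : ℕ) (hn : 1 ≤ n) (p q r : ℤ) (hr : r ≠ 0) :
    ∃ x y z : ℝ → ℝ,
      ContDiff ℝ (⊤ : ℕ∞) x ∧ ContDiff ℝ (⊤ : ℕ∞) y ∧ ContDiff ℝ (⊤ : ℕ∞) z ∧
      (∀ t : ℝ, x (t + 1) = x t + p ∧ y (t + 1) = y t + q ∧ z (t + 1) = z t + r) ∧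
      (∀ t : ℝ, Real.cos (2 * π * n * z t) * deriv x t
        + Real.sin (2 * π * n * z t) * deriv y t = 0) ∧
      (∀ t : ℝ, (r : ℝ) * deriv z t > 0) ∧
      (∀ s t : ℝ,
        ((∃ a : ℤ, x s - x t = a) ∧ (∃ b : ℤ, y s - y t = b) ∧ (∃ c : ℤ, z s - z t = c)) →
        ∃ k : ℤ, s - t = k) := by
  obtain ⟨N, hN⟩ : ∃ N : ℤ, N = n * r := ⟨_, rfl⟩
  have hN0 : N ≠ 0 := by
    rw [hN]; exact mul_ne_zero (by exact_mod_cast (by omega : n ≠ 0)) hr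
  have hNR : (N : ℝ) = n * r := by rw [hN]; push_cast; rfl
  have hN0R : (N : ℝ) ≠ 0 := by exact_mod_cast hN0
  have hrR : (r : ℝ) ≠ 0 := by exact_mod_cast hr
  have hpi : π ≠ 0 := Real.pi_ne_zero
  obtain ⟨K, hK⟩ : ∃ K : ℝ, K = 4 * N + 1 := ⟨_, rfl⟩
  obtain ⟨L, hL⟩ : ∃ L : ℝ, L = 2 * N + 1 := ⟨_, rfl⟩
  have hKL : K ^ 2 ≠ L ^ 2 := by
    intro h
    have h1 : (N : ℝ) * (3 * N + 1) = 0 := by rw [hK, hL] at h; linarith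
    have h2 : N * (3 * N + 1) = 0 := by exact_mod_cast h1
    rcases mul_eq_zero.mp h2 with h | h <;> omega
  have hK0 : 0 < |K| := by
    rw [abs_pos, hK]; exact_mod_cast (by omega : 4 * N + 1 ≠ 0)
  obtain ⟨ε, hε⟩ : ∃ ε : ℝ, ε = 1 / (4 * (|K| + |L|) * r) := ⟨_, rfl⟩
  have hM : 0 < |K| + |L| := by positivity
  have hrε : r * ε = 1 / (4 * (|K| + |L|)) := by rw [hε]; field_simp
  have hrε0 : r * ε ≠ 0 := by rw [hrε]; positivity
  have small : ∀ D : ℝ, |D| ≤ 2 * (|K| + |L|) → |r * ε * D| ≤ 1 / 2 := by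
    intro D hD
    rw [hrε, abs_mul, abs_of_pos (by positivity), div_mul_eq_mul_div, one_mul,
      div_le_iff₀ (by positivity)]
    linarith
  -- derivatives
  have hdx : ∀ t : ℝ, HasDerivAt (fun t : ℝ => p * t - p / (4 * π * N) * sin (4 * π * N * t)
      + q / (4 * π * N) * cos (4 * π * N * t) + ε * pX K L t)
      (p * (1 - cos (4 * π * N * t)) - q * sin (4 * π * N * t)
        + ε * (2 * π * K * L * (sin (2 * π * L * t) - sin (2 * π * K * t)))) t := by
    intro t
    unfold pX
    have := (((hd_lin (p : ℝ) t).sub ((hd_lin (4 * π * N) t).sin.const_mul (p / (4 * π * N)))).add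
      ((hd_lin (4 * π * N) t).cos.const_mul (q / (4 * π * N)))).add
      ((((hd_lin (2 * π * K) t).cos.const_mul L).sub
        ((hd_lin (2 * π * L) t).cos.const_mul K)).const_mul ε)
    refine this.congr_deriv ?_
    field_simp
    ring
  have hdy : ∀ t : ℝ, HasDerivAt (fun t : ℝ => q * t + q / (4 * π * N) * sin (4 * π * N * t)
      + p / (4 * π * N) * cos (4 * π * N * t) + ε * pY K L t)
      (q * (1 + cos (4 * π * N * t)) - p * sin (4 * π * N * t)
        + ε * (2 * π * K * L * (cos (2 * π * K * t) + cos (2 * π * L * t)))) t := by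
    intro t
    unfold pY
    have := (((hd_lin (q : ℝ) t).add ((hd_lin (4 * π * N) t).sin.const_mul (q / (4 * π * N)))).add
      ((hd_lin (4 * π * N) t).cos.const_mul (p / (4 * π * N)))).add
      ((((hd_lin (2 * π * K) t).sin.const_mul L).add
        ((hd_lin (2 * π * L) t).sin.const_mul K)).const_mul ε)
    refine this.congr_deriv ?_
    field_simp
    ring
  refine ⟨fun t : ℝ => p * t - p / (4 * π * N) * sin (4 * π * N * t)
      + q / (4 * π * N) * cos (4 * π * N * t) + ε * pX K L t,
    fun t : ℝ => q * t + q / (4 * π * N) * sin (4 * π * N * t)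
      + p / (4 * π * N) * cos (4 * π * N * t) + ε * pY K L t,
    fun t => r * t, ?_, ?_, ?_, ?_, ?_, ?_, ?_⟩
  · unfold pX; fun_prop
  · unfold pY; fun_prop
  · fun_prop
  · intro t
    have e1 : 4 * π * N * (t + 1) = 4 * π * N * t + 2 * π * ((2 * N : ℤ) : ℝ) := by
      push_cast; ring
    have e2 : 2 * π * K * (t + 1) = 2 * π * K * t + 2 * π * ((4 * N + 1 : ℤ) : ℝ) := by
      rw [hK]; push_cast; ring
    have e3 : 2 * π * L * (t + 1) = 2 * π * L * t + 2 * π * ((2 * N + 1 : ℤ) : ℝ) := by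
      rw [hL]; push_cast; ring
    simp only [pX, pY, cos_shift _ _ _ e1, cos_shift _ _ _ e2, cos_shift _ _ _ e3,
      sin_shift _ _ _ e1, sin_shift _ _ _ e2, sin_shift _ _ _ e3]
    refine ⟨?_, ?_, ?_⟩ <;> ring
  · intro t
    rw [(hdx t).deriv, (hdy t).deriv]
    have a1 : 4 * π * N * t = 2 * (2 * π * n * (r * t)) := by rw [hNR]; ring
    have a2 : 2 * π * K * t = 2 * π * (3 * N + 1) * t + 2 * π * n * (r * t) := by
      rw [hK, hNR]; ring
    have a3 : 2 * π * L * t = 2 * π * (3 * N + 1) * t - 2 * π * n * (r * t) := by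
      rw [hL, hNR]; ring
    rw [a1, a2, a3, cos_add, cos_sub, sin_add, sin_sub, cos_two_mul, sin_two_mul]
    have h := sin_sq_add_cos_sq (2 * π * n * (r * t))
    generalize 2 * π * n * (r * t) = θ at *
    linear_combination (-2 * p * cos θ) * h
  · intro t
    rw [(hd_lin (r : ℝ) t).deriv]
    exact mul_self_pos.mpr hrR
  · rintro s t ⟨⟨a, ha⟩, ⟨b, hb⟩, ⟨c, hc⟩⟩
    have hc' : r * (s - t) = c := by linarith
    have e1 : 4 * π * N * s = 4 * π * N * t + 2 * π * ((2 * n * c : ℤ) : ℝ) := by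
      push_cast; rw [hNR]; linear_combination (4 * π * n) * hc'
    simp only [cos_shift _ _ _ e1, sin_shift _ _ _ e1] at ha hb
    have zX := int_abs_half_zero (a * r - p * c) (r * ε * (pX K L s - pX K L t))
      (by push_cast; linear_combination -r * ha + p * hc') (small _ (pX_bound K L s t))
    have zY := int_abs_half_zero (b * r - q * c) (r * ε * (pY K L s - pY K L t))
      (by push_cast; linear_combination -r * hb + q * hc') (small _ (pY_bound K L s t))
    have zX' := sub_eq_zero.mp ((mul_eq_zero.mp zX).resolve_left hrε0)
    have zY' := sub_eq_zero.mp ((mul_eq_zero.mp zY).resolve_left hrε0)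
    refine p_inj K L s t (4 * n * c) (2 * n * c) ?_ ?_ hKL zX' zY'
    · push_cast; rw [hK, hNR]; linear_combination (4 * n) * hc'
    · push_cast; rw [hL, hNR]; linear_combination (2 * n) * hc'
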